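/- For all N ∈ (1,∞) and D ∈ (0,∞): π²·N²·2^{−(N−1)} ≥ D²·λ[h_{0,N,D}] ≥ (1/4)·N²·2^{−(N−1)}. -/

import Mathlib

open MeasureTheory Filter

/-- The function `s_κ` from the paper. -/
noncomputable def sKappa (κ θ : ℝ) : ℝ :=
  if 0 < κ then Real.sin (Real.sqrt κ * θ) / Real.sqrt κ
  else if κ < 0 then Real.sinh (Real.sqrt (-κ) * θ) / Real.sqrt (-κ)
  else θ

/-- The support of the measure `h · 𝓛¹`. -/
noncomputable def measSupport (h : ℝ → ℝ) : Set ℝ :=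
  {x : ℝ | ∀ ε > 0,
    0 < (MeasureTheory.volume.withDensity (fun y => ENNReal.ofReal (h y))) (Metric.ball x ε)}

/-- A one-dimensional `MCP(K,N)` density. -/
def IsMCPDensity (K N : ℝ) (h : ℝ → ℝ) : Prop :=
  (∀ x, 0 ≤ h x) ∧ MeasureTheory.LocallyIntegrable h MeasureTheory.volume ∧
  ∀ x₀ ∈ measSupport h, ∀ x₁ ∈ measSupport h,
    (0 < K → x₀ ≠ x₁ → |x₁ - x₀| < Real.pi / Real.sqrt (K / (N - 1))) ∧
    ∀ t ∈ Set.Icc (0:ℝ) 1,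
      (sKappa (K / (N - 1)) ((1 - t) * |x₁ - x₀|) / sKappa (K / (N - 1)) |x₁ - x₀|) ^ (N - 1)
          * h x₀
        ≤ h (t * x₁ + (1 - t) * x₀)

/-- The model density `h_{K,N,D}`. -/
noncomputable def modelDensity (K N D : ℝ) (x : ℝ) : ℝ :=
  if x ∈ Set.Icc 0 (D / 2) then sKappa (K / (N - 1)) (D - x) ^ (N - 1)
  else if x ∈ Set.Icc (D / 2) D then sKappa (K / (N - 1)) x ^ (N - 1)
  else 0

/-- Locally Lipschitz functions on a subset `I` of the reals. -/
def LocLipschitzOn (f : ℝ → ℝ) (I : Set ℝ) : Prop :=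
  ∀ x ∈ I, ∃ ε > 0, ∃ C : NNReal, LipschitzOnWith C f (I ∩ Metric.ball x ε)

/-- The local Lipschitz slope `|∇f|(x)` relative to `I`. -/
noncomputable def slopeOn (f : ℝ → ℝ) (I : Set ℝ) (x : ℝ) : ℝ :=
  Filter.limsup (fun y => |f y - f x| / |y - x|) (nhdsWithin x (I \ {x}))

/-- The Poincaré constant `λ[h, I]` of the density `h` on `I`. -/
noncomputable def poincareConst (h : ℝ → ℝ) (I : Set ℝ) : ℝ :=
  sInf { r : ℝ | ∃ f : ℝ → ℝ, LocLipschitzOn f I ∧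
    (∫ x in I, f x * h x) = 0 ∧
    (0 < ∫ x in I, (f x) ^ 2 * h x) ∧
    MeasureTheory.IntegrableOn (fun x => (f x) ^ 2 * h x) I ∧
    r = (∫ x in I, (slopeOn f I x) ^ 2 * h x) / (∫ x in I, (f x) ^ 2 * h x) }

/-!
Lower bound: for a density symmetric about `c` with right end `b`, subtracting `f c` instead of
the mean only increases `∫ f² h`, and on the half interval the fundamental theorem of calculus with
Cauchy–Schwarz gives `(f t - f c)² ≤ (∫ h⁻¹) (∫ f'² h)`. Folding the two halves together yields
`1 / λ ≤ (∫ h) (∫ h⁻¹)`, both integrals over `[c, b]`.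

Upper bound: test with a quarter period of a sine on `[c, c + r]`, extended oddly and by constants.
The density increases there while `cos (π (x - c) / r)` has mean zero and decreases, so by
Chebyshev's inequality the Rayleigh quotient is at most `(π / 2r)² A / (A + 2B)`, where `A` and `B`
are the masses of `[c, c + r]` and `[c + r, b]`. For the model density the choice `r = D / (2N)`
reduces the claim to an elementary inequality for `(1 + 1 / N) ^ N`.
-/
/-! ### Rayleigh quotients -/

lemma locLipschitzOn_univ_iff {f : ℝ → ℝ} :
    LocLipschitzOn f Set.univ ↔ LocallyLipschitz f := by
  refine forall_congr' fun x => ?_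
  simp only [Set.mem_univ, Set.univ_inter, true_implies]
  constructor
  · rintro ⟨ε, hε, C, hC⟩
    exact ⟨C, _, Metric.ball_mem_nhds x hε, hC⟩
  · rintro ⟨C, t, ht, hC⟩
    obtain ⟨ε, hε, hεt⟩ := Metric.mem_nhds_iff.1 ht
    exact ⟨ε, hε, C, hC.mono hεt⟩

lemma exists_lipschitzOnWith_Icc {f : ℝ → ℝ} (hf : LocallyLipschitz f) (a b : ℝ) :
    ∃ C, LipschitzOnWith C f (Set.Icc a b) :=
  hf.locallyLipschitzOn.exists_lipschitzOnWith_of_compact isCompact_Icc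

lemma absolutelyContinuousOnInterval_of_locallyLipschitz {f : ℝ → ℝ} (hf : LocallyLipschitz f)
    (a b : ℝ) : AbsolutelyContinuousOnInterval f a b :=
  have ⟨_, hC⟩ := exists_lipschitzOnWith_Icc hf (min a b) (max a b)
  LipschitzOnWith.absolutelyContinuousOnInterval hC

lemma ae_differentiableAt_of_locallyLipschitz {f : ℝ → ℝ} (hf : LocallyLipschitz f) :
    ∀ᵐ x, DifferentiableAt ℝ f x := by
  refine LocallyBoundedVariationOn.ae_differentiableAt fun a b _ _ => ?_
  have h := (absolutelyContinuousOnInterval_of_locallyLipschitz hf a b).boundedVariationOn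
  exact h.mono fun x hx => Set.Icc_subset_uIcc hx.2

lemma exists_abs_deriv_le_of_locallyLipschitz {f : ℝ → ℝ} (hf : LocallyLipschitz f) (a b : ℝ) :
    ∃ C, ∀ x ∈ Set.Icc a b, |deriv f x| ≤ C := by
  obtain ⟨C, hC⟩ := exists_lipschitzOnWith_Icc hf (a - 1) (b + 1)
  exact ⟨C, fun x hx => norm_deriv_le_of_lipschitzOn
    (Icc_mem_nhds (by linarith [hx.1]) (by linarith [hx.2])) hC⟩

lemma slopeOn_univ_of_differentiableAt {f : ℝ → ℝ} {x : ℝ} (hf : DifferentiableAt ℝ f x) :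
    slopeOn f Set.univ x = |deriv f x| := by
  rw [slopeOn, ← Set.compl_eq_univ_sdiff]
  refine ((hasDerivAt_iff_tendsto_slope.1 hf.hasDerivAt).abs.congr fun y => ?_).limsup_eq
  rw [slope_def_field, abs_div]

lemma integral_slopeOn_sq_mul {f : ℝ → ℝ} (hf : LocallyLipschitz f) (h : ℝ → ℝ) :
    ∫ x, slopeOn f Set.univ x ^ 2 * h x = ∫ x, deriv f x ^ 2 * h x := by
  refine integral_congr_ae ?_
  filter_upwards [ae_differentiableAt_of_locallyLipschitz hf] with x hx
  rw [slopeOn_univ_of_differentiableAt hx, sq_abs]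

/-- The competitors in the definition of `poincareConst h Set.univ`. -/
structure IsPoincareTest (h f : ℝ → ℝ) : Prop where
  locallyLipschitz : LocallyLipschitz f
  integral_mul_eq_zero : ∫ x, f x * h x = 0
  integral_sq_mul_pos : 0 < ∫ x, f x ^ 2 * h x
  integrable_sq_mul : Integrable fun x => f x ^ 2 * h x

/-- The Rayleigh quotient of `f` for the density `h`, written with the derivative in place of the
slope: the two agree almost everywhere for locally Lipschitz functions. -/
noncomputable def rayleighQuotient (h f : ℝ → ℝ) : ℝ :=
  (∫ x, deriv f x ^ 2 * h x) / ∫ x, f x ^ 2 * h x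

lemma poincareConst_univ_eq_sInf_rayleighQuotient (h : ℝ → ℝ) :
    poincareConst h Set.univ = sInf (rayleighQuotient h '' {f | IsPoincareTest h f}) := by
  simp only [poincareConst, locLipschitzOn_univ_iff, setIntegral_univ, integrableOn_univ]
  congr 1
  ext r
  constructor
  · rintro ⟨f, hf, hmean, hpos, hint, rfl⟩
    exact ⟨f, ⟨hf, hmean, hpos, hint⟩, by rw [rayleighQuotient, integral_slopeOn_sq_mul hf]⟩
  · rintro ⟨f, ⟨hf, hmean, hpos, hint⟩, rfl⟩
    exact ⟨f, hf, hmean, hpos, hint, by rw [rayleighQuotient, integral_slopeOn_sq_mul hf]⟩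

lemma IsPoincareTest.poincareConst_le_rayleighQuotient {h f : ℝ → ℝ} (hh : ∀ x, 0 ≤ h x)
    (hf : IsPoincareTest h f) : poincareConst h Set.univ ≤ rayleighQuotient h f := by
  rw [poincareConst_univ_eq_sInf_rayleighQuotient]
  refine csInf_le ⟨0, ?_⟩ (Set.mem_image_of_mem _ hf)
  rintro _ ⟨g, hg, rfl⟩
  exact div_nonneg (integral_nonneg fun x => mul_nonneg (sq_nonneg _) (hh x))
    hg.integral_sq_mul_pos.le

lemma le_poincareConst_of_forall_le_rayleighQuotient {h : ℝ → ℝ} {r : ℝ}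
    (hne : ∃ f, IsPoincareTest h f) (hr : ∀ f, IsPoincareTest h f → r ≤ rayleighQuotient h f) :
    r ≤ poincareConst h Set.univ := by
  rw [poincareConst_univ_eq_sInf_rayleighQuotient]
  exact le_csInf (Set.Nonempty.image _ hne) (Set.forall_mem_image.2 hr)

/-! ### Symmetric densities -/

/-- Integrable densities symmetric about `c`, vanishing off `[2 * c - b, b]` and positive inside it
except possibly at `c`. By symmetry, positivity and vanishing need only be recorded to the right
of `c`. -/
structure IsSymmetricDensity (h : ℝ → ℝ) (c b : ℝ) : Prop where
  lt : c < b
  integrable : Integrable h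
  nonneg : ∀ x, 0 ≤ h x
  pos_of_mem : ∀ x ∈ Set.Ioo c b, 0 < h x
  eq_zero_of_lt : ∀ x, b < x → h x = 0
  reflect : ∀ x, h (2 * c - x) = h x

namespace IsSymmetricDensity

variable {h : ℝ → ℝ} {c b : ℝ}

lemma eq_zero_of_notMem (hh : IsSymmetricDensity h c b) {x : ℝ}
    (hx : x ∉ Set.Icc (2 * c - b) b) : h x = 0 := by
  rcases lt_or_ge b x with hbx | hxb
  · exact hh.eq_zero_of_lt x hbx
  · rw [← hh.reflect x]
    exact hh.eq_zero_of_lt _ (by linarith [not_le.1 fun hle => hx ⟨hle, hxb⟩])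

lemma integrable_mul_of_le (hh : IsSymmetricDensity h c b) {F : ℝ → ℝ} {C : ℝ}
    (hF : AEStronglyMeasurable F) (hC : ∀ x ∈ Set.Icc (2 * c - b) b, |F x| ≤ C) :
    Integrable fun x => F x * h x := by
  refine (hh.integrable.const_mul C).mono' (hF.mul hh.integrable.aestronglyMeasurable)
    (ae_of_all _ fun x => ?_)
  rw [norm_mul, Real.norm_eq_abs, Real.norm_of_nonneg (hh.nonneg x)]
  by_cases hx : x ∈ Set.Icc (2 * c - b) b
  · exact mul_le_mul_of_nonneg_right (hC x hx) (hh.nonneg x)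
  · simp [hh.eq_zero_of_notMem hx]

lemma integrable_continuous_mul (hh : IsSymmetricDensity h c b) {F : ℝ → ℝ}
    (hF : Continuous F) : Integrable fun x => F x * h x :=
  have ⟨_, hC⟩ := isCompact_Icc.exists_bound_of_continuousOn hF.continuousOn
  hh.integrable_mul_of_le hF.aestronglyMeasurable hC

lemma integrable_deriv_sq_mul (hh : IsSymmetricDensity h c b) {f : ℝ → ℝ}
    (hf : LocallyLipschitz f) : Integrable fun x => deriv f x ^ 2 * h x := by
  obtain ⟨C, hC⟩ := exists_abs_deriv_le_of_locallyLipschitz hf (2 * c - b) b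
  refine hh.integrable_mul_of_le (C := C ^ 2)
    ((measurable_deriv f).pow_const 2).aestronglyMeasurable fun x hx => ?_
  rw [abs_pow]
  gcongr
  exact hC x hx

lemma integral_mul_eq_add (hh : IsSymmetricDensity h c b) {F : ℝ → ℝ}
    (hF : Integrable fun x => F x * h x) :
    ∫ x, F x * h x = (∫ x in c..b, F (2 * c - x) * h x) + ∫ x in c..b, F x * h x := by
  have hright : ∫ x in Set.Icc (2 * c - b) b, F x * h x = ∫ x, F x * h x :=
    setIntegral_eq_integral_of_forall_compl_eq_zero fun x hx => by
      rw [hh.eq_zero_of_notMem hx, mul_zero]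
  have hleft : ∫ x in c..b, F (2 * c - x) * h x = ∫ x in (2 * c - b)..c, F x * h x := by
    have := intervalIntegral.integral_comp_sub_left (a := c) (b := b) (fun x => F x * h x) (2 * c)
    simpa only [hh.reflect, show 2 * c - c = c by ring] using this
  rw [hleft, intervalIntegral.integral_add_adjacent_intervals hF.intervalIntegrable
    hF.intervalIntegrable, intervalIntegral.integral_of_le (by linarith [hh.lt]),
    ← integral_Icc_eq_integral_Ioc, hright]

lemma integral_mul_eq_two_mul (hh : IsSymmetricDensity h c b) {F : ℝ → ℝ}
    (hF : Integrable fun x => F x * h x) (hsymm : ∀ x, F (2 * c - x) = F x) :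
    ∫ x, F x * h x = 2 * ∫ x in c..b, F x * h x := by
  rw [hh.integral_mul_eq_add hF]
  simp only [hsymm]
  rw [two_mul]

lemma integral_mul_eq_zero (hh : IsSymmetricDensity h c b) {F : ℝ → ℝ}
    (hF : Integrable fun x => F x * h x) (hanti : ∀ x, F (2 * c - x) = -F x) :
    ∫ x, F x * h x = 0 := by
  rw [hh.integral_mul_eq_add hF]
  simp only [hanti, neg_mul, intervalIntegral.integral_neg, neg_add_cancel]

lemma isPoincareTest_of_antisymm (hh : IsSymmetricDensity h c b) {f : ℝ → ℝ}
    (hf : LocallyLipschitz f) (hanti : ∀ x, f (2 * c - x) = -f x)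
    (hne : ∀ x ∈ Set.Ioo c b, f x ≠ 0) : IsPoincareTest h f where
  locallyLipschitz := hf
  integral_mul_eq_zero := hh.integral_mul_eq_zero (hh.integrable_continuous_mul hf.continuous) hanti
  integral_sq_mul_pos := by
    have hint : Integrable fun x => f x ^ 2 * h x :=
      hh.integrable_continuous_mul (hf.continuous.pow 2)
    rw [hh.integral_mul_eq_two_mul hint fun x => by rw [hanti, neg_sq]]
    exact mul_pos two_pos (intervalIntegral.intervalIntegral_pos_of_pos_on
      hint.intervalIntegrable
      (fun x hx => mul_pos (sq_pos_of_ne_zero (hne x hx)) (hh.pos_of_mem x hx)) hh.lt)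
  integrable_sq_mul := hh.integrable_continuous_mul (hf.continuous.pow 2)

end IsSymmetricDensity

/-! ### Lower bound by Cauchy–Schwarz -/

lemma sq_integral_le_integral_inv_mul_integral_sq_mul {α : Type*} [MeasurableSpace α]
    {μ : Measure α} {g w : α → ℝ} (hw : ∀ᵐ x ∂μ, 0 < w x) (hinv : Integrable (fun x => (w x)⁻¹) μ)
    (hg : Integrable g μ) (hgw : Integrable (fun x => g x ^ 2 * w x) μ) :
    (∫ x, g x ∂μ) ^ 2 ≤ (∫ x, (w x)⁻¹ ∂μ) * ∫ x, g x ^ 2 * w x ∂μ := by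
  have hquad : ∀ s : ℝ, 0 ≤ (∫ x, (w x)⁻¹ ∂μ) * (s * s) + -2 * (∫ x, g x ∂μ) * s +
      ∫ x, g x ^ 2 * w x ∂μ := fun s => by
    calc 0 ≤ ∫ x, ((w x)⁻¹ * (s * s) + -2 * g x * s + g x ^ 2 * w x) ∂μ := by
          refine integral_nonneg_of_ae (hw.mono fun x hx => ?_)
          have hsq : (w x)⁻¹ * (s * s) + -2 * g x * s + g x ^ 2 * w x =
              (w x)⁻¹ * (s - g x * w x) ^ 2 := by field_simp; ring
          simp only [Pi.zero_apply, hsq]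
          positivity
      _ = _ := by
          rw [integral_add ((hinv.mul_const _).fun_add ((hg.const_mul _).mul_const _)) hgw,
            integral_add (hinv.mul_const _) ((hg.const_mul _).mul_const _)]
          simp only [integral_mul_const, integral_const_mul]
  have hdiscrim := discrim_le_zero hquad
  rw [discrim] at hdiscrim
  linarith

lemma integral_sq_mul_le_integral_sub_sq_mul {α : Type*} [MeasurableSpace α] {μ : Measure α}
    {f w : α → ℝ} (hw : ∀ x, 0 ≤ w x) (hint : Integrable w μ)
    (hf : Integrable (fun x => f x * w x) μ) (hf2 : Integrable (fun x => f x ^ 2 * w x) μ)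
    (hmean : ∫ x, f x * w x ∂μ = 0) (k : ℝ) :
    ∫ x, f x ^ 2 * w x ∂μ ≤ ∫ x, (f x - k) ^ 2 * w x ∂μ := by
  have hexpand : ∫ x, (f x - k) ^ 2 * w x ∂μ =
      (∫ x, f x ^ 2 * w x ∂μ) + k ^ 2 * ∫ x, w x ∂μ := by
    calc ∫ x, (f x - k) ^ 2 * w x ∂μ
        = ∫ x, (f x ^ 2 * w x + -2 * k * (f x * w x) + k ^ 2 * w x) ∂μ := by
          congr 1 with x
          ring
      _ = _ := by
          rw [integral_add (hf2.fun_add (hf.const_mul _)) (hint.const_mul _),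
            integral_add hf2 (hf.const_mul _), integral_const_mul, integral_const_mul, hmean]
          ring
  rw [hexpand]
  exact le_add_of_nonneg_right (mul_nonneg (sq_nonneg k) (integral_nonneg hw))

lemma integral_nonneg_of_nonneg_Ioo {f : ℝ → ℝ} {a b : ℝ} (hab : a ≤ b)
    (hf : ∀ x ∈ Set.Ioo a b, 0 ≤ f x) : 0 ≤ ∫ x in a..b, f x := by
  rw [intervalIntegral.integral_of_le hab, integral_Ioc_eq_integral_Ioo]
  exact setIntegral_nonneg measurableSet_Ioo hf

lemma integral_le_integral_of_nonneg_Ioo {f : ℝ → ℝ} {a b t : ℝ} (hat : a ≤ t) (htb : t ≤ b)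
    (hf : ∀ x ∈ Set.Ioo a b, 0 ≤ f x) (hint : IntervalIntegrable f volume a b) :
    ∫ x in a..t, f x ≤ ∫ x in a..b, f x := by
  refine intervalIntegral.integral_mono_interval le_rfl hat htb ?_ hint
  rw [← Measure.restrict_congr_set Ioo_ae_eq_Ioc]
  exact (ae_restrict_mem measurableSet_Ioo).mono hf

lemma sq_sub_le_integral_inv_mul_integral_deriv_sq_mul {φ w : ℝ → ℝ} {a t : ℝ} (hat : a ≤ t)
    (hφ : AbsolutelyContinuousOnInterval φ a t) (hpos : ∀ x ∈ Set.Ioo a t, 0 < w x)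
    (hinv : IntervalIntegrable (fun x => (w x)⁻¹) volume a t)
    (henergy : IntervalIntegrable (fun x => deriv φ x ^ 2 * w x) volume a t) :
    (φ t - φ a) ^ 2 ≤ (∫ x in a..t, (w x)⁻¹) * ∫ x in a..t, deriv φ x ^ 2 * w x := by
  rw [← hφ.integral_deriv_eq_sub]
  simp only [intervalIntegral.integral_of_le hat, integral_Ioc_eq_integral_Ioo]
  exact sq_integral_le_integral_inv_mul_integral_sq_mul
    ((ae_restrict_mem measurableSet_Ioo).mono hpos)
    ((intervalIntegrable_iff_integrableOn_Ioo_of_le hat).1 hinv)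
    ((intervalIntegrable_iff_integrableOn_Ioo_of_le hat).1 hφ.intervalIntegrable_deriv)
    ((intervalIntegrable_iff_integrableOn_Ioo_of_le hat).1 henergy)

lemma integral_sub_sq_mul_le_mul_integral_deriv_sq_mul {φ w : ℝ → ℝ} {a b : ℝ} (hab : a ≤ b)
    (hφ : AbsolutelyContinuousOnInterval φ a b) (hpos : ∀ x ∈ Set.Ioo a b, 0 < w x)
    (hw : IntervalIntegrable w volume a b)
    (hinv : IntervalIntegrable (fun x => (w x)⁻¹) volume a b)
    (henergy : IntervalIntegrable (fun x => deriv φ x ^ 2 * w x) volume a b) :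
    ∫ x in a..b, (φ x - φ a) ^ 2 * w x ≤
      ((∫ x in a..b, w x) * ∫ x in a..b, (w x)⁻¹) * ∫ x in a..b, deriv φ x ^ 2 * w x := by
  set V := ∫ x in a..b, (w x)⁻¹
  set E := ∫ x in a..b, deriv φ x ^ 2 * w x
  have hinv_pos : ∀ x ∈ Set.Ioo a b, 0 ≤ (w x)⁻¹ := fun x hx => (inv_pos.2 (hpos x hx)).le
  have henergy_nonneg : ∀ x ∈ Set.Ioo a b, 0 ≤ deriv φ x ^ 2 * w x := fun x hx =>
    mul_nonneg (sq_nonneg _) (hpos x hx).le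
  have hpointwise : ∀ t ∈ Set.Ioo a b, (φ t - φ a) ^ 2 ≤ V * E := fun t ht => by
    have hsub : Set.uIcc a t ⊆ Set.uIcc a b :=
      Set.uIcc_subset_uIcc_left (Set.Icc_subset_uIcc ⟨ht.1.le, ht.2.le⟩)
    refine (sq_sub_le_integral_inv_mul_integral_deriv_sq_mul ht.1.le (hφ.mono hsub)
      (fun x hx => hpos x ⟨hx.1, hx.2.trans ht.2⟩) (hinv.mono_set hsub)
      (henergy.mono_set hsub)).trans ?_
    exact mul_le_mul (integral_le_integral_of_nonneg_Ioo ht.1.le ht.2.le hinv_pos hinv)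
      (integral_le_integral_of_nonneg_Ioo ht.1.le ht.2.le henergy_nonneg henergy)
      (integral_nonneg_of_nonneg_Ioo ht.1.le fun x hx => henergy_nonneg x ⟨hx.1, hx.2.trans ht.2⟩)
      (integral_nonneg_of_nonneg_Ioo hab hinv_pos)
  calc ∫ x in a..b, (φ x - φ a) ^ 2 * w x ≤ ∫ x in a..b, V * E * w x :=
        intervalIntegral.integral_mono_on_of_le_Ioo hab
          (hw.continuousOn_mul ((hφ.continuousOn.sub continuousOn_const).pow 2))
          (hw.const_mul _) fun x hx => mul_le_mul_of_nonneg_right (hpointwise x hx) (hpos x hx).le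
    _ = _ := by
      rw [intervalIntegral.integral_const_mul]
      ring

namespace IsSymmetricDensity

variable {h : ℝ → ℝ} {c b : ℝ}

lemma integral_sq_mul_le_integral_deriv_sq_mul (hh : IsSymmetricDensity h c b)
    (hinv : IntervalIntegrable (fun x => (h x)⁻¹) volume c b) {f : ℝ → ℝ}
    (hf : LocallyLipschitz f) (hmean : ∫ x, f x * h x = 0) :
    ∫ x, f x ^ 2 * h x ≤
      ((∫ x in c..b, h x) * ∫ x in c..b, (h x)⁻¹) * ∫ x, deriv f x ^ 2 * h x := by
  have hardy : ∀ {φ : ℝ → ℝ}, LocallyLipschitz φ → ∫ x in c..b, (φ x - φ c) ^ 2 * h x ≤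
      ((∫ x in c..b, h x) * ∫ x in c..b, (h x)⁻¹) * ∫ x in c..b, deriv φ x ^ 2 * h x :=
    fun hφ => integral_sub_sq_mul_le_mul_integral_deriv_sq_mul hh.lt.le
      (absolutelyContinuousOnInterval_of_locallyLipschitz hφ c b) hh.pos_of_mem
      hh.integrable.intervalIntegrable hinv (hh.integrable_deriv_sq_mul hφ).intervalIntegrable
  have hreflect : LocallyLipschitz fun x => f (2 * c - x) :=
    hf.comp (IsometryEquiv.subLeft (2 * c)).isometry.lipschitz.locallyLipschitz
  have hright := hardy hf
  have hleft := hardy hreflect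
  simp only [show 2 * c - c = c by ring, deriv_comp_const_sub, neg_sq] at hleft
  have hf2 : Integrable fun x => f x ^ 2 * h x :=
    hh.integrable_continuous_mul (hf.continuous.pow 2)
  have hsub : Integrable fun x => (f x - f c) ^ 2 * h x :=
    hh.integrable_continuous_mul ((hf.continuous.sub continuous_const).pow 2)
  calc ∫ x, f x ^ 2 * h x ≤ ∫ x, (f x - f c) ^ 2 * h x :=
        integral_sq_mul_le_integral_sub_sq_mul hh.nonneg hh.integrable
          (hh.integrable_continuous_mul hf.continuous) hf2 hmean (f c)
    _ = (∫ x in c..b, (f (2 * c - x) - f c) ^ 2 * h x) +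
          ∫ x in c..b, (f x - f c) ^ 2 * h x := hh.integral_mul_eq_add hsub
    _ ≤ _ := add_le_add hleft hright
    _ = _ := by rw [← mul_add, hh.integral_mul_eq_add (hh.integrable_deriv_sq_mul hf)]

lemma integral_mul_integral_inv_pos (hh : IsSymmetricDensity h c b)
    (hinv : IntervalIntegrable (fun x => (h x)⁻¹) volume c b) :
    0 < (∫ x in c..b, h x) * ∫ x in c..b, (h x)⁻¹ :=
  mul_pos
    (intervalIntegral.intervalIntegral_pos_of_pos_on hh.integrable.intervalIntegrable
      hh.pos_of_mem hh.lt)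
    (intervalIntegral.intervalIntegral_pos_of_pos_on hinv
      (fun x hx => inv_pos.2 (hh.pos_of_mem x hx)) hh.lt)

theorem inv_integral_mul_integral_inv_le_poincareConst (hh : IsSymmetricDensity h c b)
    (hinv : IntervalIntegrable (fun x => (h x)⁻¹) volume c b) :
    ((∫ x in c..b, h x) * ∫ x in c..b, (h x)⁻¹)⁻¹ ≤ poincareConst h Set.univ := by
  have hlin : LocallyLipschitz fun x : ℝ => x - c :=
    (IsometryEquiv.subRight c).isometry.lipschitz.locallyLipschitz
  refine le_poincareConst_of_forall_le_rayleighQuotient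
    ⟨_, hh.isPoincareTest_of_antisymm hlin (fun x => by ring) fun x hx => (sub_pos.2 hx.1).ne'⟩
    fun f hf => ?_
  rw [rayleighQuotient, le_div_iff₀ hf.integral_sq_mul_pos,
    inv_mul_le_iff₀ (hh.integral_mul_integral_inv_pos hinv)]
  exact hh.integral_sq_mul_le_integral_deriv_sq_mul hinv hf.locallyLipschitz
    hf.integral_mul_eq_zero

end IsSymmetricDensity

/-! ### Upper bound by Chebyshev's inequality -/

lemma integral_mul_nonpos_of_monotoneOn {g w : ℝ → ℝ} {a b m : ℝ} (ham : a ≤ m) (hmb : m ≤ b)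
    (hw : MonotoneOn w (Set.Icc a b)) (hg : ContinuousOn g (Set.uIcc a b))
    (hg_nonneg : ∀ x ∈ Set.Icc a m, 0 ≤ g x) (hg_nonpos : ∀ x ∈ Set.Icc m b, g x ≤ 0)
    (hg_zero : ∫ x in a..b, g x = 0) : ∫ x in a..b, g x * w x ≤ 0 := by
  have hab := ham.trans hmb
  have hw_int : IntervalIntegrable w volume a b :=
    MonotoneOn.intervalIntegrable (by rwa [Set.uIcc_of_le hab])
  calc ∫ x in a..b, g x * w x ≤ ∫ x in a..b, g x * w m := by
        refine intervalIntegral.integral_mono_on hab (hw_int.continuousOn_mul hg)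
          (hg.intervalIntegrable.mul_const _) fun x hx => ?_
        rcases le_total x m with hxm | hmx
        · exact mul_le_mul_of_nonneg_left (hw hx ⟨ham, hmb⟩ hxm) (hg_nonneg x ⟨hx.1, hxm⟩)
        · exact mul_le_mul_of_nonpos_left (hw ⟨ham, hmb⟩ hx hmx) (hg_nonpos x ⟨hmx, hx.2⟩)
    _ = 0 := by rw [intervalIntegral.integral_mul_const, hg_zero, zero_mul]

lemma integral_cos_two_mul_mul_nonpos {w : ℝ → ℝ} {c r : ℝ} (hr : 0 < r)
    (hw : MonotoneOn w (Set.Icc c (c + r))) :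
    ∫ x in c..(c + r), Real.cos (2 * (Real.pi / (2 * r) * (x - c))) * w x ≤ 0 := by
  have hangle : ∀ x, 2 * (Real.pi / (2 * r) * (x - c)) = Real.pi / r * (x - c) := fun x => by
    field_simp
  have hk : 0 < Real.pi / r := by positivity
  have hmid : Real.pi / r * (r / 2) = Real.pi / 2 := by field_simp
  have hend : Real.pi / r * r = Real.pi := by field_simp
  simp only [hangle]
  refine integral_mul_nonpos_of_monotoneOn (m := c + r / 2) (by linarith) (by linarith) hw
    (by fun_prop) (fun x hx => ?_) (fun x hx => ?_) ?_
  · refine Real.cos_nonneg_of_neg_pi_div_two_le_of_le ?_ ?_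
    · have := mul_nonneg hk.le (sub_nonneg.2 hx.1)
      linarith [Real.pi_pos]
    · rw [← hmid]
      gcongr
      linarith [hx.2]
  · refine Real.cos_nonpos_of_pi_div_two_le_of_le ?_ ?_
    · rw [← hmid]
      gcongr
      linarith [hx.1]
    · have : Real.pi / r * (x - c) ≤ Real.pi / r * r := by
        gcongr
        linarith [hx.2]
      linarith [Real.pi_pos]
  · rw [intervalIntegral.integral_comp_sub_right (fun y => Real.cos (Real.pi / r * y)) c,
      sub_self, add_sub_cancel_left, intervalIntegral.integral_comp_mul_left _ hk.ne',
      integral_cos, hend, mul_zero, Real.sin_pi, Real.sin_zero, sub_self, smul_zero]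

lemma integral_cos_sq_mul_le {w : ℝ → ℝ} {c r : ℝ} (hr : 0 < r)
    (hw : MonotoneOn w (Set.Icc c (c + r))) :
    ∫ x in c..(c + r), Real.cos (Real.pi / (2 * r) * (x - c)) ^ 2 * w x ≤
      (∫ x in c..(c + r), w x) / 2 := by
  have hw_int : IntervalIntegrable w volume c (c + r) :=
    MonotoneOn.intervalIntegrable (by rwa [Set.uIcc_of_le (by linarith)])
  have hsplit : ∫ x in c..(c + r), Real.cos (Real.pi / (2 * r) * (x - c)) ^ 2 * w x =
      (∫ x in c..(c + r), w x) / 2 +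
        (∫ x in c..(c + r), Real.cos (2 * (Real.pi / (2 * r) * (x - c))) * w x) / 2 := by
    rw [← intervalIntegral.integral_div, ← intervalIntegral.integral_div,
      ← intervalIntegral.integral_add (hw_int.div_const 2)
        ((hw_int.continuousOn_mul (by fun_prop)).div_const 2)]
    simp only [Real.cos_sq]
    congr 1 with x
    ring
  linarith [integral_cos_two_mul_mul_nonpos hr hw]

lemma le_integral_sin_sq_mul {w : ℝ → ℝ} {c r : ℝ} (hr : 0 < r)
    (hw : MonotoneOn w (Set.Icc c (c + r))) :
    (∫ x in c..(c + r), w x) / 2 ≤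
      ∫ x in c..(c + r), Real.sin (Real.pi / (2 * r) * (x - c)) ^ 2 * w x := by
  have hw_int : IntervalIntegrable w volume c (c + r) :=
    MonotoneOn.intervalIntegrable (by rwa [Set.uIcc_of_le (by linarith)])
  have hpythagoras : ∫ x in c..(c + r), Real.sin (Real.pi / (2 * r) * (x - c)) ^ 2 * w x =
      (∫ x in c..(c + r), w x) -
        ∫ x in c..(c + r), Real.cos (Real.pi / (2 * r) * (x - c)) ^ 2 * w x := by
    rw [← intervalIntegral.integral_sub hw_int (hw_int.continuousOn_mul (by fun_prop))]
    simp only [Real.sin_sq]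
    congr 1 with x
    ring
  linarith [integral_cos_sq_mul_le hr hw]

/-- The test function for the upper bound: a quarter period of a sine on `[c, c + r]`, reflected
oddly in `c` and extended by the constants `±1`. -/
noncomputable def clampedSine (c r x : ℝ) : ℝ :=
  Real.sin (Real.pi / (2 * r) * max (-r) (min r (x - c)))

section ClampedSine

variable {c r x : ℝ}

lemma locallyLipschitz_clampedSine (c r : ℝ) : LocallyLipschitz (clampedSine c r) := by
  have hsin : ContDiff ℝ 1 fun y => Real.sin (Real.pi / (2 * r) * y) := by fun_prop
  have hsub : LocallyLipschitz fun x : ℝ => x - c :=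
    (IsometryEquiv.subRight c).isometry.lipschitz.locallyLipschitz
  exact hsin.locallyLipschitz.comp ((hsub.const_min r).const_max (-r))

lemma clampedSine_reflect (hr : 0 ≤ r) : clampedSine c r (2 * c - x) = -clampedSine c r x := by
  have hclamp : max (-r) (min r (2 * c - x - c)) = -max (-r) (min r (x - c)) := by grind
  rw [clampedSine, clampedSine, hclamp, mul_neg, Real.sin_neg]

lemma clampedSine_of_mem (hx : x ∈ Set.Icc c (c + r)) :
    clampedSine c r x = Real.sin (Real.pi / (2 * r) * (x - c)) := by
  rw [clampedSine, min_eq_right (by linarith [hx.2]), max_eq_right (by linarith [hx.1, hx.2])]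

lemma clampedSine_of_ge (hr : 0 < r) (hx : c + r ≤ x) : clampedSine c r x = 1 := by
  rw [clampedSine, min_eq_left (by linarith), max_eq_right (by linarith),
    show Real.pi / (2 * r) * r = Real.pi / 2 by field_simp, Real.sin_pi_div_two]

lemma clampedSine_pos (hr : 0 < r) (hx : c < x) : 0 < clampedSine c r x := by
  have hmin : 0 < min r (x - c) := lt_min hr (sub_pos.2 hx)
  rw [clampedSine, max_eq_right (by linarith)]
  refine Real.sin_pos_of_pos_of_lt_pi (by positivity) ?_
  calc Real.pi / (2 * r) * min r (x - c) ≤ Real.pi / (2 * r) * r := by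
        gcongr
        exact min_le_left _ _
    _ = Real.pi / 2 := by field_simp
    _ < Real.pi := half_lt_self Real.pi_pos

lemma deriv_clampedSine_of_mem (hx : x ∈ Set.Ioo c (c + r)) :
    deriv (clampedSine c r) x =
      Real.pi / (2 * r) * Real.cos (Real.pi / (2 * r) * (x - c)) := by
  have heq : clampedSine c r =ᶠ[nhds x] fun y => Real.sin (Real.pi / (2 * r) * (y - c)) := by
    filter_upwards [Ioo_mem_nhds hx.1 hx.2] with y hy
    exact clampedSine_of_mem ⟨hy.1.le, hy.2.le⟩
  have hlin : HasDerivAt (fun y => Real.pi / (2 * r) * (y - c)) (Real.pi / (2 * r)) x := by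
    simpa using ((hasDerivAt_id x).sub_const c).const_mul (Real.pi / (2 * r))
  rw [heq.deriv_eq, hlin.sin.deriv, mul_comm]

lemma deriv_clampedSine_of_gt (hr : 0 < r) (hx : c + r < x) : deriv (clampedSine c r) x = 0 := by
  have heq : clampedSine c r =ᶠ[nhds x] fun _ => 1 := by
    filter_upwards [Ioi_mem_nhds hx] with y hy
    exact clampedSine_of_ge hr (le_of_lt hy)
  rw [heq.deriv_eq, deriv_const]

end ClampedSine

namespace IsSymmetricDensity

variable {h : ℝ → ℝ} {c b r : ℝ}

lemma isPoincareTest_clampedSine (hh : IsSymmetricDensity h c b) (hr : 0 < r) :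
    IsPoincareTest h (clampedSine c r) :=
  hh.isPoincareTest_of_antisymm (locallyLipschitz_clampedSine c r)
    (fun _ => clampedSine_reflect hr.le) fun _ hx => (clampedSine_pos hr hx.1).ne'

lemma integral_deriv_clampedSine_sq_mul_le (hh : IsSymmetricDensity h c b) (hr : 0 < r)
    (hrb : c + r ≤ b) (hmono : MonotoneOn h (Set.Icc c (c + r))) :
    ∫ x, deriv (clampedSine c r) x ^ 2 * h x ≤
      (Real.pi / (2 * r)) ^ 2 * ∫ x in c..(c + r), h x := by
  have hint := hh.integrable_deriv_sq_mul (locallyLipschitz_clampedSine c r)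
  have hsymm : ∀ x, deriv (clampedSine c r) (2 * c - x) ^ 2 = deriv (clampedSine c r) x ^ 2 :=
    fun x => by
      have hodd : (fun y => clampedSine c r (2 * c - y)) = fun y => -clampedSine c r y :=
        funext fun _ => clampedSine_reflect hr.le
      have := congrFun (congrArg deriv hodd) x
      rw [deriv_comp_const_sub, deriv.fun_neg, neg_inj] at this
      rw [this]
  have hinner : ∫ x in c..(c + r), deriv (clampedSine c r) x ^ 2 * h x =
      (Real.pi / (2 * r)) ^ 2 *
        ∫ x in c..(c + r), Real.cos (Real.pi / (2 * r) * (x - c)) ^ 2 * h x := by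
    rw [← intervalIntegral.integral_const_mul]
    refine intervalIntegral.integral_congr_Ioo_of_le (by linarith) fun x hx => ?_
    simp only [deriv_clampedSine_of_mem hx]
    ring
  have houter : ∫ x in (c + r)..b, deriv (clampedSine c r) x ^ 2 * h x = 0 := by
    rw [intervalIntegral.integral_congr_Ioo_of_le (g := fun _ => 0) hrb fun x hx => by
      simp only [deriv_clampedSine_of_gt hr hx.1, zero_pow two_ne_zero, zero_mul]]
    exact intervalIntegral.integral_zero
  rw [hh.integral_mul_eq_two_mul hint hsymm, ← intervalIntegral.integral_add_adjacent_intervals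
    hint.intervalIntegrable hint.intervalIntegrable, hinner, houter, add_zero, mul_left_comm]
  gcongr
  linarith [integral_cos_sq_mul_le hr hmono]

lemma le_integral_clampedSine_sq_mul (hh : IsSymmetricDensity h c b) (hr : 0 < r)
    (hrb : c + r ≤ b) (hmono : MonotoneOn h (Set.Icc c (c + r))) :
    (∫ x in c..(c + r), h x) + 2 * ∫ x in (c + r)..b, h x ≤
      ∫ x, clampedSine c r x ^ 2 * h x := by
  have hint := (hh.isPoincareTest_clampedSine hr).integrable_sq_mul
  have hinner : ∫ x in c..(c + r), clampedSine c r x ^ 2 * h x =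
      ∫ x in c..(c + r), Real.sin (Real.pi / (2 * r) * (x - c)) ^ 2 * h x :=
    intervalIntegral.integral_congr_Ioo_of_le (by linarith) fun x hx => by
      simp only [clampedSine_of_mem ⟨hx.1.le, hx.2.le⟩]
  have houter : ∫ x in (c + r)..b, clampedSine c r x ^ 2 * h x = ∫ x in (c + r)..b, h x :=
    intervalIntegral.integral_congr_Ioo_of_le hrb fun x hx => by
      simp only [clampedSine_of_ge hr hx.1.le, one_pow, one_mul]
  rw [hh.integral_mul_eq_two_mul hint fun x => by rw [clampedSine_reflect hr.le, neg_sq],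
    ← intervalIntegral.integral_add_adjacent_intervals hint.intervalIntegrable
      hint.intervalIntegrable, hinner, houter]
  linarith [le_integral_sin_sq_mul hr hmono]

theorem poincareConst_le_of_monotoneOn (hh : IsSymmetricDensity h c b) (hr : 0 < r)
    (hrb : c + r ≤ b) (hmono : MonotoneOn h (Set.Icc c (c + r))) :
    poincareConst h Set.univ ≤ (Real.pi / (2 * r)) ^ 2 *
      ((∫ x in c..(c + r), h x) / ((∫ x in c..(c + r), h x) + 2 * ∫ x in (c + r)..b, h x)) := by
  have hinner : 0 < ∫ x in c..(c + r), h x := intervalIntegral.intervalIntegral_pos_of_pos_on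
    hh.integrable.intervalIntegrable
    (fun x hx => hh.pos_of_mem x ⟨hx.1, hx.2.trans_le hrb⟩) (by linarith)
  have houter : 0 ≤ ∫ x in (c + r)..b, h x :=
    intervalIntegral.integral_nonneg hrb fun x _ => hh.nonneg x
  refine ((hh.isPoincareTest_clampedSine hr).poincareConst_le_rayleighQuotient hh.nonneg).trans ?_
  rw [← mul_div_assoc, rayleighQuotient]
  exact div_le_div₀ (by positivity) (hh.integral_deriv_clampedSine_sq_mul_le hr hrb hmono)
    (by positivity) (hh.le_integral_clampedSine_sq_mul hr hrb hmono)

end IsSymmetricDensity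

/-! ### The model density for `K = 0` -/

lemma modelDensity_zero_eq_indicator (N D : ℝ) :
    modelDensity 0 N D = (Set.Icc 0 D).indicator fun x => max x (D - x) ^ (N - 1) := by
  funext x
  simp only [modelDensity, sKappa, zero_div, lt_irrefl, if_false, Set.indicator, Set.mem_Icc]
  split_ifs <;> first | (congr 1; grind) | grind

lemma modelDensity_zero_of_mem {N D x : ℝ} (hx : x ∈ Set.Icc (D / 2) D) :
    modelDensity 0 N D x = x ^ (N - 1) := by
  rw [modelDensity_zero_eq_indicator, Set.indicator_of_mem (by grind),
    max_eq_left (by linarith [hx.1])]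

lemma isSymmetricDensity_modelDensity_zero (N : ℝ) {D : ℝ} (hD : 0 < D) :
    IsSymmetricDensity (modelDensity 0 N D) (D / 2) D where
  lt := half_lt_self hD
  integrable := by
    rw [modelDensity_zero_eq_indicator, integrable_indicator_iff measurableSet_Icc]
    refine ContinuousOn.integrableOn_Icc (ContinuousOn.rpow_const (by fun_prop) fun x _ => ?_)
    grind
  nonneg x := by
    rw [modelDensity_zero_eq_indicator]
    refine Set.indicator_nonneg (fun y hy => Real.rpow_nonneg ?_ _) x
    exact hy.1.trans (le_max_left _ _)
  pos_of_mem x hx := by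
    rw [modelDensity_zero_of_mem ⟨hx.1.le, hx.2.le⟩]
    exact Real.rpow_pos_of_pos ((half_pos hD).trans hx.1) _
  eq_zero_of_lt x hx := by
    rw [modelDensity_zero_eq_indicator, Set.indicator_of_notMem fun hx' => hx.not_ge hx'.2]
  reflect x := by
    have hmem : 2 * (D / 2) - x ∈ Set.Icc 0 D ↔ x ∈ Set.Icc 0 D := by grind
    have hmax : max (2 * (D / 2) - x) (D - (2 * (D / 2) - x)) = max x (D - x) := by grind
    simp only [modelDensity_zero_eq_indicator, Set.indicator_apply, hmem, hmax]

lemma monotoneOn_modelDensity_zero {N D : ℝ} (hN : 1 ≤ N) :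
    MonotoneOn (modelDensity 0 N D) (Set.Icc (D / 2) D) := by
  intro x hx y hy hxy
  rw [modelDensity_zero_of_mem hx, modelDensity_zero_of_mem hy]
  exact Real.rpow_le_rpow (by linarith [hx.1, hx.2]) hxy (sub_nonneg.2 hN)

lemma integral_modelDensity_zero {N D s t : ℝ} (hN : 0 < N) (hs : D / 2 ≤ s) (hst : s ≤ t)
    (ht : t ≤ D) :
    ∫ x in s..t, modelDensity 0 N D x = (t ^ N - s ^ N) / N := by
  have hpow : ∫ x in s..t, modelDensity 0 N D x = ∫ x in s..t, x ^ (N - 1) :=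
    intervalIntegral.integral_congr_Ioo_of_le hst fun x hx =>
      modelDensity_zero_of_mem ⟨hs.trans hx.1.le, hx.2.le.trans ht⟩
  rw [hpow, integral_rpow (.inl (by linarith)), sub_add_cancel]

lemma intervalIntegrable_inv_modelDensity_zero (N : ℝ) {D : ℝ} (hD : 0 < D) :
    IntervalIntegrable (fun x => (modelDensity 0 N D x)⁻¹) volume (D / 2) D := by
  have hpos : ∀ x ∈ Set.Icc (D / 2) D, 0 < x := fun x hx => (half_pos hD).trans_le hx.1
  refine ContinuousOn.intervalIntegrable_of_Icc (half_le_self hD.le) ?_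
  refine ContinuousOn.congr (f := fun x => (x ^ (N - 1))⁻¹) ?_ fun x hx => by
    simp only [modelDensity_zero_of_mem hx]
  exact (continuousOn_id.rpow_const fun x hx => .inl (hpos x hx).ne').inv₀ fun x hx =>
    (Real.rpow_pos_of_pos (hpos x hx) _).ne'

lemma integral_inv_modelDensity_zero_le {N D : ℝ} (hN : 0 < N) (hD : 0 < D) :
    ∫ x in (D / 2)..D, (modelDensity 0 N D x)⁻¹ ≤ D ^ 2 * ((D / 2) ^ (-N) - D ^ (-N)) / N := by
  have hle : D / 2 ≤ D := half_le_self hD.le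
  have hpos : ∀ x ∈ Set.Icc (D / 2) D, 0 < x := fun x hx => (half_pos hD).trans_le hx.1
  have hnotMem : (0 : ℝ) ∉ Set.uIcc (D / 2) D := by
    rw [Set.uIcc_of_le hle]
    exact fun h0 => (hpos 0 h0).false
  calc ∫ x in (D / 2)..D, (modelDensity 0 N D x)⁻¹
      ≤ ∫ x in (D / 2)..D, D ^ 2 * x ^ (-N - 1) := by
        refine intervalIntegral.integral_mono_on hle
          (intervalIntegrable_inv_modelDensity_zero N hD)
          ((intervalIntegral.intervalIntegrable_rpow (.inr hnotMem)).const_mul _) fun x hx => ?_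
        have hx0 := hpos x hx
        calc (modelDensity 0 N D x)⁻¹ = x ^ 2 * x ^ (-N - 1) := by
              rw [modelDensity_zero_of_mem hx, ← Real.rpow_neg hx0.le,
                ← Real.rpow_natCast, ← Real.rpow_add hx0]
              congr 1
              push_cast
              ring
          _ ≤ D ^ 2 * x ^ (-N - 1) := by
              gcongr
              exact hx.2
    _ = _ := by
        rw [intervalIntegral.integral_const_mul,
          integral_rpow (.inr ⟨by linarith, hnotMem⟩), sub_add_cancel]
        field_simp
        ring

lemma div_two_rpow {D : ℝ} (hD : 0 ≤ D) (N : ℝ) : (D / 2) ^ N = D ^ N * 2 ^ (-N) := by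
  rw [Real.div_rpow hD zero_le_two, Real.rpow_neg zero_le_two, div_eq_mul_inv]

lemma two_rpow_neg_sub_one_eq (N : ℝ) : (2 : ℝ) ^ (-(N - 1)) = 2 * 2 ^ (-N) := by
  rw [show -(N - 1) = 1 + -N by ring, Real.rpow_add two_pos, Real.rpow_one]

lemma integral_mul_integral_inv_modelDensity_zero_le {N D : ℝ} (hN : 0 < N) (hD : 0 < D) :
    (∫ x in (D / 2)..D, modelDensity 0 N D x) * ∫ x in (D / 2)..D, (modelDensity 0 N D x)⁻¹ ≤
      D ^ 2 / (N ^ 2 * 2 ^ (-N)) := by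
  have hq1 : (2 : ℝ) ^ (-N) ≤ 1 := Real.rpow_le_one_of_one_le_of_nonpos one_le_two (by linarith)
  have hinv := integral_inv_modelDensity_zero_le hN hD
  rw [integral_modelDensity_zero hN le_rfl (half_le_self hD.le) le_rfl]
  rw [div_two_rpow hD.le, neg_neg, Real.rpow_neg hD.le] at hinv
  rw [div_two_rpow hD.le]
  have h2 : (2 : ℝ) ^ N = (2 ^ (-N))⁻¹ := by rw [Real.rpow_neg zero_le_two, inv_inv]
  rw [h2] at hinv
  have hP : 0 < D ^ N := Real.rpow_pos_of_pos hD N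
  have hq : (0 : ℝ) < 2 ^ (-N) := by positivity
  set P := D ^ N
  set q : ℝ := 2 ^ (-N)
  calc (P - P * q) / N * ∫ x in (D / 2)..D, (modelDensity 0 N D x)⁻¹
      ≤ (P - P * q) / N * (D ^ 2 * (P⁻¹ * q⁻¹ - P⁻¹) / N) := by
        refine mul_le_mul_of_nonneg_left hinv (div_nonneg ?_ hN.le)
        nlinarith
    _ = D ^ 2 / (N ^ 2 * q) * (1 - q) ^ 2 := by
        field_simp
    _ ≤ D ^ 2 / (N ^ 2 * q) := mul_le_of_le_one_right (by positivity) (by nlinarith)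

lemma le_sq_mul_poincareConst_modelDensity_zero {N D : ℝ} (hN : 0 < N) (hD : 0 < D) :
    1 / 2 * N ^ 2 * (2 : ℝ) ^ (-(N - 1)) ≤
      D ^ 2 * poincareConst (modelDensity 0 N D) Set.univ := by
  have hh := isSymmetricDensity_modelDensity_zero N hD
  have hinv := intervalIntegrable_inv_modelDensity_zero N hD
  calc 1 / 2 * N ^ 2 * (2 : ℝ) ^ (-(N - 1)) = D ^ 2 * (D ^ 2 / (N ^ 2 * 2 ^ (-N)))⁻¹ := by
        rw [two_rpow_neg_sub_one_eq]
        field_simp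
    _ ≤ D ^ 2 * ((∫ x in (D / 2)..D, modelDensity 0 N D x) *
          ∫ x in (D / 2)..D, (modelDensity 0 N D x)⁻¹)⁻¹ := by
        gcongr
        · exact hh.integral_mul_integral_inv_pos hinv
        · exact integral_mul_integral_inv_modelDensity_zero_le hN hD
    _ ≤ _ := by
        gcongr
        exact hh.inv_integral_mul_integral_inv_le_poincareConst hinv

lemma one_add_inv_rpow_le_exp_one {N : ℝ} (hN : 0 < N) : (1 + 1 / N) ^ N ≤ Real.exp 1 := by
  calc (1 + 1 / N) ^ N ≤ Real.exp (1 / N) ^ N := by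
        gcongr
        linarith [Real.add_one_le_exp (1 / N)]
    _ = Real.exp 1 := by rw [← Real.exp_mul, one_div_mul_cancel hN.ne']

lemma two_rpow_neg_le_one_sub_half {x : ℝ} (hx0 : 0 ≤ x) (hx1 : x ≤ 1) :
    (2 : ℝ) ^ (-x) ≤ 1 - x / 2 := by
  have hbernoulli := rpow_one_add_le_one_add_mul_self (s := -1 / 2) (by norm_num) hx0 hx1
  rw [show (1 : ℝ) + -1 / 2 = 2⁻¹ by norm_num, Real.inv_rpow zero_le_two,
    ← Real.rpow_neg zero_le_two] at hbernoulli
  linarith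

lemma two_mul_exp_neg_half_le : 2 * Real.exp (-1 / 2) ≤ 4 / 3 := by
  have hexp : (3 / 2 : ℝ) ≤ Real.exp (1 / 2) := by linarith [Real.add_one_le_exp (1 / 2 : ℝ)]
  have hinv : (Real.exp (1 / 2))⁻¹ ≤ (3 / 2)⁻¹ := inv_anti₀ (by norm_num) hexp
  rw [neg_div, Real.exp_neg]
  linarith

lemma one_add_inv_rpow_le_of_le_two {x : ℝ} (hx0 : 0 ≤ x) (hx1 : x ≤ 1) :
    (1 + 1 / (1 + x)) ^ (1 + x) ≤ 2 + 2 / 3 * x := by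
  have hbase : 1 + 1 / (1 + x) ≤ 2 * Real.exp (-(x / (2 * (1 + x)))) := by
    calc 1 + 1 / (1 + x) = 2 * (1 + -(x / (2 * (1 + x)))) := by field_simp; ring
      _ ≤ 2 * Real.exp (-(x / (2 * (1 + x)))) := by
          gcongr
          linarith [Real.add_one_le_exp (-(x / (2 * (1 + x))))]
  have hpow : (2 * Real.exp (-(x / (2 * (1 + x))))) ^ (1 + x) =
      2 * (2 * Real.exp (-1 / 2)) ^ x := by
    rw [Real.mul_rpow zero_le_two (Real.exp_pos _).le,
      Real.mul_rpow zero_le_two (Real.exp_pos _).le, ← Real.exp_mul, ← Real.exp_mul,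
      Real.rpow_add two_pos, Real.rpow_one, mul_assoc]
    congr 3
    field_simp
  have hbernoulli := rpow_one_add_le_one_add_mul_self (s := 1 / 3) (by norm_num) hx0 hx1
  calc (1 + 1 / (1 + x)) ^ (1 + x) ≤ 2 * (2 * Real.exp (-1 / 2)) ^ x := by
        rw [← hpow]
        gcongr
    _ ≤ 2 * (1 + 1 / 3) ^ x := by
        gcongr
        linarith [two_mul_exp_neg_half_le]
    _ ≤ 2 + 2 / 3 * x := by linarith

lemma one_add_inv_rpow_mul_le {N : ℝ} (hN : 1 ≤ N) :
    (1 + 1 / N) ^ N * (1 + 2 ^ (-(N - 1))) + 2 ^ (-(N - 1)) ≤ 5 := by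
  have hq : (0 : ℝ) < 2 ^ (-(N - 1)) := by positivity
  rcases le_total N 2 with hN2 | hN2
  · have hE := one_add_inv_rpow_le_of_le_two (sub_nonneg.2 hN) (sub_le_iff_le_add.2 (by linarith))
    have hq_le := two_rpow_neg_le_one_sub_half (sub_nonneg.2 hN) (by linarith)
    rw [add_sub_cancel] at hE
    nlinarith
  · have hE : (1 + 1 / N) ^ N ≤ 3 :=
      (one_add_inv_rpow_le_exp_one (by linarith)).trans (by linarith [Real.exp_one_lt_d9])
    have hq_le : (2 : ℝ) ^ (-(N - 1)) ≤ 2 ^ (-1 : ℝ) :=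
      Real.rpow_le_rpow_of_exponent_le one_le_two (by linarith)
    rw [Real.rpow_neg_one] at hq_le
    nlinarith

lemma div_two_add_div_two_mul_le {N D : ℝ} (hN : 1 ≤ N) (hD : 0 ≤ D) :
    D / 2 + D / (2 * N) ≤ D := by
  have : D / (2 * N) ≤ D / 2 := div_le_div_of_nonneg_left hD two_pos (by linarith)
  linarith

lemma integral_modelDensity_zero_ratio_le {N D m : ℝ} (hN : 1 ≤ N) (hD : 0 < D)
    (hm : m = D / 2 + D / (2 * N)) :
    (∫ x in (D / 2)..m, modelDensity 0 N D x) /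
      ((∫ x in (D / 2)..m, modelDensity 0 N D x) + 2 * ∫ x in m..D, modelDensity 0 N D x) ≤
      2 ^ (-(N - 1)) := by
  have hh := isSymmetricDensity_modelDensity_zero N hD
  have hN0 : 0 < N := by linarith
  have hmD : m ≤ D := hm ▸ div_two_add_div_two_mul_le hN hD.le
  have hmid : D / 2 ≤ m := hm ▸ le_add_of_nonneg_right (by positivity)
  have hinner : 0 ≤ ∫ x in (D / 2)..m, modelDensity 0 N D x :=
    intervalIntegral.integral_nonneg hmid fun x _ => hh.nonneg x
  have houter : 0 ≤ ∫ x in m..D, modelDensity 0 N D x :=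
    intervalIntegral.integral_nonneg hmD fun x _ => hh.nonneg x
  refine div_le_of_le_mul₀ (by positivity) (by positivity) ?_
  have hpow : m ^ N = D ^ N * 2 ^ (-N) * (1 + 1 / N) ^ N := by
    rw [← div_two_rpow hD.le, ← Real.mul_rpow (by positivity) (by positivity), hm]
    congr 1
    field_simp
  have hkey := one_add_inv_rpow_mul_le hN
  rw [integral_modelDensity_zero hN0 le_rfl hmid hmD,
    integral_modelDensity_zero hN0 hmid hmD le_rfl, hpow, div_two_rpow hD.le]
  rw [two_rpow_neg_sub_one_eq] at hkey ⊢
  linear_combination D ^ N * 2 ^ (-N) / N * hkey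

lemma sq_mul_poincareConst_modelDensity_zero_le {N D : ℝ} (hN : 1 ≤ N) (hD : 0 < D) :
    D ^ 2 * poincareConst (modelDensity 0 N D) Set.univ ≤
      Real.pi ^ 2 * N ^ 2 * (2 : ℝ) ^ (-(N - 1)) := by
  have hr : 0 < D / (2 * N) := div_pos hD (by linarith)
  have hmD : D / 2 + D / (2 * N) ≤ D := div_two_add_div_two_mul_le hN hD.le
  have hmono := (monotoneOn_modelDensity_zero (D := D) hN).mono (Set.Icc_subset_Icc_right hmD)
  calc D ^ 2 * poincareConst (modelDensity 0 N D) Set.univ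
      ≤ D ^ 2 * ((Real.pi / (2 * (D / (2 * N)))) ^ 2 * 2 ^ (-(N - 1))) := by
        gcongr
        refine ((isSymmetricDensity_modelDensity_zero N hD).poincareConst_le_of_monotoneOn hr hmD
          hmono).trans ?_
        gcongr
        exact integral_modelDensity_zero_ratio_le hN hD rfl
    _ = _ := by field_simp

theorem stmt_12_general (N D : ℝ) (hN : 1 < N) (hD : 0 < D) :
    D ^ 2 * poincareConst (modelDensity 0 N D) Set.univ ≤
        Real.pi ^ 2 * N ^ 2 * (2 : ℝ) ^ (-(N - 1)) ∧
      1 / 2 * N ^ 2 * (2 : ℝ) ^ (-(N - 1)) ≤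
        D ^ 2 * poincareConst (modelDensity 0 N D) Set.univ :=
  ⟨sq_mul_poincareConst_modelDensity_zero_le hN.le hD,
    le_sq_mul_poincareConst_modelDensity_zero (by linarith) hD⟩

/-- Two-sided estimate for `λ[h_{0,N,D}]` (Lemma 5.2). -/
theorem stmt_12 (N D : ℝ) (hN : 1 < N) (hD : 0 < D) :
    Real.pi ^ 2 * N ^ 2 * (2:ℝ) ^ (-(N - 1))
        ≥ D ^ 2 * poincareConst (modelDensity 0 N D) Set.univ ∧
    D ^ 2 * poincareConst (modelDensity 0 N D) Set.univ
        ≥ (1 / 4) * N ^ 2 * (2:ℝ) ^ (-(N - 1)) := by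
  obtain ⟨hupper, hlower⟩ := stmt_12_general N D hN hD
  exact ⟨hupper, le_trans (by gcongr; norm_num) hlower⟩
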